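/- Let (X,d) be a compact metric space, let {S_1,...,S_N} be an IFS of contracting similarities on X with similarity dimension s, let C ⊆ X be a nonempty compact set, and let F_C be the inhomogeneous attractor with condensation C. Then for all t > max{s, lb-dim C}, lb-dim F_C ≤ max{t, s + p_t(C)·t}. -/

import Mathlib

open Set Filter Topology Metric MeasureTheory

/-- Minimum number of sets of diameter at most `δ` needed to cover `F`. -/
noncomputable def coverN {X : Type*} [MetricSpace X] (F : Set X) (δ : ℝ) : ℕ :=
  sInf {n : ℕ | ∃ U : Fin n → Set X, (∀ i, EMetric.diam (U i) ≤ ENNReal.ofReal δ) ∧ F ⊆ ⋃ i, U i}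

/-- Lower box dimension. -/
noncomputable def lbDim {X : Type*} [MetricSpace X] (F : Set X) : ℝ :=
  Filter.liminf (fun δ : ℝ => Real.log (coverN F δ) / (-Real.log δ)) (𝓝[>] 0)

/-- Upper box dimension. -/
noncomputable def ubDim {X : Type*} [MetricSpace X] (F : Set X) : ℝ :=
  Filter.limsup (fun δ : ℝ => Real.log (coverN F δ) / (-Real.log δ)) (𝓝[>] 0)

/-- The `(t,δ)`-covering regularity exponent `p_{t,δ}(C)`. -/
noncomputable def cre {X : Type*} [MetricSpace X] (C : Set X) (t δ : ℝ) : ℝ :=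
  sSup {p : ℝ | 0 ≤ p ∧ p ≤ 1 ∧ δ ^ (-(p * t)) ≤ (coverN C (δ ^ p) : ℝ)}

/-- The `t`-covering regularity exponent `p_t(C)`. -/
noncomputable def creT {X : Type*} [MetricSpace X] (C : Set X) (t : ℝ) : ℝ :=
  Filter.liminf (fun δ : ℝ => cre C t δ) (𝓝[>] 0)

section Helpers

variable {X : Type*} [MetricSpace X]

lemma coverN_le_card (F : Set X) (δ : ℝ) {ι : Type*} [Fintype ι] (U : ι → Set X)
    (hU : ∀ i, EMetric.diam (U i) ≤ ENNReal.ofReal δ) (hF : F ⊆ ⋃ i, U i) :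
    coverN F δ ≤ Fintype.card ι := by
  apply Nat.sInf_le
  refine ⟨fun k => U ((Fintype.equivFin ι).symm k), fun k => hU _, ?_⟩
  intro x hx
  obtain ⟨i, hi⟩ := mem_iUnion.1 (hF hx)
  exact mem_iUnion.2 ⟨Fintype.equivFin ι i, by simpa using hi⟩

lemma coverN_spec [CompactSpace X] (F : Set X) {δ : ℝ} (hδ : 0 < δ) :
    ∃ U : Fin (coverN F δ) → Set X,
      (∀ i, EMetric.diam (U i) ≤ ENNReal.ofReal δ) ∧ F ⊆ ⋃ i, U i := by
  have hne : {n : ℕ | ∃ U : Fin n → Set X,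
      (∀ i, EMetric.diam (U i) ≤ ENNReal.ofReal δ) ∧ F ⊆ ⋃ i, U i}.Nonempty := by
    obtain ⟨t, -, htf, ht⟩ := finite_cover_balls_of_compact (isCompact_univ (X := X))
      (half_pos hδ)
    haveI := htf.fintype
    refine ⟨Fintype.card t, fun k => ball ((Fintype.equivFin t).symm k : X) (δ / 2),
      fun k => ?_, ?_⟩
    · apply EMetric.diam_le
      intro x hx y hy
      rw [edist_dist]
      apply ENNReal.ofReal_le_ofReal
      have h1 := mem_ball.1 hx
      have h2 := mem_ball'.1 hy
      have := dist_triangle x ((Fintype.equivFin t).symm k : X) y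
      linarith
    · intro x _
      obtain ⟨y, hy, hxy⟩ := mem_iUnion₂.1 (ht (mem_univ x))
      exact mem_iUnion.2 ⟨Fintype.equivFin t ⟨y, hy⟩, by simpa using hxy⟩
  exact Nat.sInf_mem hne

lemma coverN_mono [CompactSpace X] {F G : Set X} (h : F ⊆ G) {δ δ' : ℝ} (hδ : 0 < δ)
    (hδ' : δ ≤ δ') : coverN F δ' ≤ coverN G δ := by
  obtain ⟨U, hU, hG⟩ := coverN_spec G hδ
  simpa using coverN_le_card F δ' U
    (fun i => (hU i).trans (ENNReal.ofReal_le_ofReal hδ')) (h.trans hG)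

lemma one_le_coverN [CompactSpace X] {F : Set X} (h : F.Nonempty) {δ : ℝ} (hδ : 0 < δ) :
    1 ≤ coverN F δ := by
  obtain ⟨U, hU, hG⟩ := coverN_spec F hδ
  obtain ⟨x, hx⟩ := h
  obtain ⟨i, hi⟩ := mem_iUnion.1 (hG hx)
  have := i.2
  omega

lemma coverN_rec [CompactSpace X] {N : ℕ} (S : Fin N → X → X) (r : Fin N → ℝ)
    (hr : ∀ i, r i ∈ Set.Ioo (0 : ℝ) 1)
    (hS : ∀ i x y, dist (S i x) (S i y) = r i * dist x y)
    (C FC : Set X) (hFC : FC = (⋃ i, S i '' FC) ∪ C) {x : ℝ} (hx : 0 < x) :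
    coverN FC x ≤ (∑ i, coverN FC (x / r i)) + coverN C x := by
  have h1 : ∀ i, ∃ U : Fin (coverN FC (x / r i)) → Set X,
      (∀ k, EMetric.diam (U k) ≤ ENNReal.ofReal (x / r i)) ∧ FC ⊆ ⋃ k, U k :=
    fun i => coverN_spec FC (div_pos hx (hr i).1)
  choose U hU hUc using h1
  obtain ⟨V, hV, hVc⟩ := coverN_spec C hx
  have := coverN_le_card FC x
    (ι := (Σ i, Fin (coverN FC (x / r i))) ⊕ Fin (coverN C x))
    (Sum.elim (fun a => S a.1 '' U a.1 a.2) V) ?_ ?_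
  · simpa using this
  · rintro (⟨i, k⟩ | k)
    · simp only [Sum.elim_inl]
      apply EMetric.diam_le
      rintro _ ⟨a, ha, rfl⟩ _ ⟨b, hb, rfl⟩
      have h2 := (EMetric.edist_le_diam_of_mem ha hb).trans (hU i k)
      have hpos := (hr i).1
      rw [edist_dist, ENNReal.ofReal_le_ofReal_iff (div_pos hx hpos).le] at h2
      rw [edist_dist, hS]
      apply ENNReal.ofReal_le_ofReal
      rw [le_div_iff₀ hpos] at h2
      linarith
    · exact hV k
  · intro y hy
    rw [hFC] at hy
    rcases hy with hy | hy
    · obtain ⟨i, z, hz, rfl⟩ := mem_iUnion.1 hy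
      obtain ⟨k, hk⟩ := mem_iUnion.1 (hUc i hz)
      exact mem_iUnion.2 ⟨Sum.inl ⟨i, k⟩, ⟨z, hk, rfl⟩⟩
    · obtain ⟨k, hk⟩ := mem_iUnion.1 (hVc hy)
      exact mem_iUnion.2 ⟨Sum.inr k, hk⟩

/-- The abstract recursion estimate. -/
lemma rec_bound {N : ℕ} (r : Fin N → ℝ) (hr : ∀ i, r i ∈ Set.Ioo (0 : ℝ) 1)
    (R b : ℝ) (hR1 : R < 1) (hR : ∀ i, r i ≤ R) (hb0 : 0 < b) (hb1 : b ≤ 1)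
    (hb : ∀ i, b ≤ r i) (hR0 : 0 < R)
    (g h : ℝ → ℝ) (δ t σ A B D K : ℝ) (hδ : 0 < δ) (hσ : 0 ≤ σ)
    (hrec : ∀ x, 0 < x → g x ≤ (∑ i, g (x / r i)) + h x)
    (hK : ∀ x, 1 ≤ x → g x ≤ K)
    (hD : 0 ≤ D)
    (hh : ∀ x, δ ≤ x → x < 1 → h x ≤ x ^ (-t) + D)
    (hA0 : 0 ≤ A) (hA : A * (∑ i, r i ^ t) + 1 ≤ A)
    (hB : B * (∑ i, r i ^ σ) + D ≤ B) (hB0 : 0 ≤ B) (hBK : K ≤ B * b ^ σ) :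
    ∀ x, δ ≤ x → x < 1 → g x ≤ A * x ^ (-t) + B * x ^ (-σ) := by
  have key : ∀ n : ℕ, ∀ x, δ ≤ x → R ^ n ≤ x → x ≤ 1 / b →
      g x ≤ A * x ^ (-t) + B * x ^ (-σ) := by
    have base : ∀ x, 1 ≤ x → x ≤ 1 / b → g x ≤ A * x ^ (-t) + B * x ^ (-σ) := by
      intro x hx1 hxb
      have hx0 : 0 < x := by linarith
      have h1 : 0 ≤ A * x ^ (-t) := by positivity
      have h2 : b ^ σ ≤ x ^ (-σ) := by
        rw [Real.rpow_neg hx0.le, ← Real.inv_rpow hx0.le]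
        apply Real.rpow_le_rpow hb0.le _ hσ
        rw [le_inv_comm₀ hb0 hx0]
        simpa using hxb
      have h3 := mul_le_mul_of_nonneg_left h2 hB0
      linarith [hK x hx1]
    intro n
    induction n with
    | zero =>
      intro x _ hx hxb
      exact base x (by simpa using hx) hxb
    | succ n ih =>
      intro x hxδ hx hxb
      rcases le_or_gt 1 x with h1 | h1
      · exact base x h1 hxb
      have hx0 : 0 < x := by linarith
      have hstep : ∀ i, g (x / r i) ≤ A * (r i ^ t * x ^ (-t)) + B * (r i ^ σ * x ^ (-σ)) := by
        intro i
        have hri := (hr i).1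
        have e : ∀ u : ℝ, (x / r i) ^ (-u) = r i ^ u * x ^ (-u) := by
          intro u
          rw [Real.div_rpow hx0.le hri.le, Real.rpow_neg hri.le]
          field_simp
        rw [← e, ← e]
        apply ih
        · rw [le_div_iff₀ hri]
          nlinarith [(hr i).2]
        · rw [le_div_iff₀ hri]
          refine le_trans ?_ hx
          rw [pow_succ]
          exact mul_le_mul_of_nonneg_left (hR i) (by positivity)
        · exact div_le_div₀ zero_le_one h1.le hb0 (hb i)
      have hsum : ∑ i, g (x / r i) ≤
          A * (∑ i, r i ^ t) * x ^ (-t) + B * (∑ i, r i ^ σ) * x ^ (-σ) := by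
        refine (Finset.sum_le_sum (fun i _ => hstep i)).trans (le_of_eq ?_)
        rw [Finset.sum_add_distrib, ← Finset.mul_sum, ← Finset.mul_sum, ← Finset.sum_mul,
          ← Finset.sum_mul]
        ring
      have hp1 : 0 ≤ x ^ (-t) := by positivity
      have hp2 : 1 ≤ x ^ (-σ) :=
        Real.one_le_rpow_of_pos_of_le_one_of_nonpos hx0 h1.le (by linarith)
      have := hrec x hx0
      have := hh x hxδ h1
      have a1 := mul_le_mul_of_nonneg_right hA hp1
      have a2 := mul_le_mul_of_nonneg_right hB (zero_le_one.trans hp2)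
      nlinarith
  intro x hxδ hx1
  obtain ⟨n, hn⟩ := exists_pow_lt_of_lt_one (lt_of_lt_of_le hδ hxδ) hR1
  exact key n x hxδ hn.le (hx1.le.trans (by rw [le_div_iff₀ hb0]; linarith))

lemma frequently_good [CompactSpace X] (C : Set X) (hCne : C.Nonempty) (t q : ℝ) (ht : 0 < t)
    (hq : creT C t < q)
    (hf : ∃ᶠ δ in 𝓝[>] (0 : ℝ), Real.log (coverN C δ) / (-Real.log δ) < t) :
    ∃ᶠ δ in 𝓝[>] (0 : ℝ), ∀ x, δ ≤ x → x < 1 →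
      (coverN C x : ℝ) ≤ x ^ (-t) + δ ^ (-(q * t)) := by
  have hsmall : ∀ᶠ δ in 𝓝[>] (0 : ℝ), δ ∈ Ioo (0 : ℝ) 1 := Ioo_mem_nhdsGT one_pos
  rcases le_or_gt q 1 with hq1 | hq1
  · have hbd : ∀ δ : ℝ, BddAbove
        {p : ℝ | 0 ≤ p ∧ p ≤ 1 ∧ δ ^ (-(p * t)) ≤ (coverN C (δ ^ p) : ℝ)} :=
      fun δ => ⟨1, fun p hp => hp.2.1⟩
    have hmem0 : ∀ δ : ℝ, (0 : ℝ) ∈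
        {p : ℝ | 0 ≤ p ∧ p ≤ 1 ∧ δ ^ (-(p * t)) ≤ (coverN C (δ ^ p) : ℝ)} := by
      intro δ
      refine ⟨le_rfl, zero_le_one, ?_⟩
      simp only [zero_mul, neg_zero, Real.rpow_zero]
      exact_mod_cast one_le_coverN hCne one_pos
    have hcre1 : ∀ δ, cre C t δ ≤ 1 := fun δ => csSup_le ⟨0, hmem0 δ⟩ fun p hp => hp.2.1
    have hcre0 : ∀ δ, 0 ≤ cre C t δ := fun δ => le_csSup (hbd δ) (hmem0 δ)
    have hq0 : 0 < q := by
      refine lt_of_le_of_lt ?_ hq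
      refine le_liminf_of_le ?_ (Eventually.of_forall hcre0)
      exact (isBoundedUnder_of ⟨1, hcre1⟩ : IsBoundedUnder (· ≤ ·) _ _).isCoboundedUnder_ge
    have hfr : ∃ᶠ δ in 𝓝[>] (0 : ℝ), cre C t δ < q :=
      frequently_lt_of_liminf_lt
        (isBoundedUnder_of ⟨1, hcre1⟩ : IsBoundedUnder (· ≤ ·) _ _).isCoboundedUnder_ge hq
    refine (hfr.and_eventually hsmall).mono ?_
    rintro δ ⟨hcre, hδ0, hδ1⟩ x hx hx1
    have hx0 : 0 < x := lt_of_lt_of_le hδ0 hx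
    have hnot : ∀ p, q ≤ p → p ≤ 1 → (coverN C (δ ^ p) : ℝ) ≤ δ ^ (-(p * t)) := by
      intro p hp hp1
      by_contra hcon
      push Not at hcon
      have : p ≤ cre C t δ := le_csSup (hbd δ) ⟨hq0.le.trans hp, hp1, hcon.le⟩
      linarith
    have hlogδ : Real.log δ < 0 := Real.log_neg hδ0 hδ1
    have hxp : δ ^ (Real.log x / Real.log δ) = x := by
      rw [Real.rpow_def_of_pos hδ0, mul_div_cancel₀ _ hlogδ.ne, Real.exp_log hx0]
    rcases le_or_gt q (Real.log x / Real.log δ) with hp | hp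
    · have := hnot _ hp (by
        rw [div_le_one_of_neg hlogδ]
        exact Real.log_le_log hδ0 hx)
      rw [← mul_neg, Real.rpow_mul hδ0.le, hxp] at this
      have : 0 ≤ δ ^ (-(q * t)) := by positivity
      linarith
    · have h1 := hnot q le_rfl hq1
      have h2 : δ ^ q ≤ x := by
        rw [← hxp]
        exact Real.rpow_le_rpow_of_exponent_ge hδ0 hδ1.le hp.le
      have h3 : (coverN C x : ℝ) ≤ coverN C (δ ^ q) := by
        exact_mod_cast coverN_mono (Subset.refl C) (by positivity) h2
      have : 0 ≤ x ^ (-t) := by positivity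
      linarith
  · refine (hf.and_eventually hsmall).mono ?_
    rintro δ ⟨hlt, hδ0, hδ1⟩ x hx hx1
    have hx0 : 0 < x := lt_of_lt_of_le hδ0 hx
    have hlogδ : Real.log δ < 0 := Real.log_neg hδ0 hδ1
    have hc : (0 : ℝ) < coverN C δ := by exact_mod_cast one_le_coverN hCne hδ0
    have h1 : (coverN C δ : ℝ) ≤ δ ^ (-t) := by
      rw [div_lt_iff₀ (by linarith)] at hlt
      rw [Real.rpow_def_of_pos hδ0, ← Real.exp_log hc]
      apply Real.exp_le_exp.2
      linarith
    have h2 : δ ^ (-t) ≤ δ ^ (-(q * t)) :=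
      Real.rpow_le_rpow_of_exponent_ge hδ0 hδ1.le (by nlinarith)
    have h3 : (coverN C x : ℝ) ≤ coverN C δ := by
      exact_mod_cast coverN_mono (Subset.refl C) hδ0 hx
    have : 0 ≤ x ^ (-t) := by positivity
    linarith

end Helpers

theorem lower_box_dim_inhomogeneous_upper_bound
    {X : Type*} [MetricSpace X] [CompactSpace X] {N : ℕ} (hN : 0 < N)
    (S : Fin N → X → X) (r : Fin N → ℝ)
    (hr : ∀ i, r i ∈ Set.Ioo (0 : ℝ) 1)
    (hS : ∀ i x y, dist (S i x) (S i y) = r i * dist x y)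
    (s : ℝ) (hs : ∑ i, r i ^ s = 1)
    (C : Set X) (hC : IsCompact C) (hCne : C.Nonempty)
    (FC : Set X) (hFCc : IsCompact FC) (hFCne : FC.Nonempty)
    (hFC : FC = (⋃ i, S i '' FC) ∪ C)
 :
    ∀ t : ℝ, max s (lbDim C) < t → lbDim FC ≤ max t (s + creT C t * t) := by
  intro t ht
  obtain ⟨hst, hCt⟩ := max_lt_iff.1 ht
  haveI : Nonempty (Fin N) := ⟨⟨0, hN⟩⟩
  have hs0 : 0 ≤ s := by
    by_contra hneg
    push Not at hneg
    have h1 : ∀ i, 1 < r i ^ s := fun i =>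
      Real.one_lt_rpow_of_pos_of_lt_one_of_neg (hr i).1 (hr i).2 hneg
    have h2 : r ⟨0, hN⟩ ^ s ≤ ∑ i, r i ^ s :=
      Finset.single_le_sum (f := fun i => r i ^ s)
        (fun i _ => (zero_le_one.trans (h1 i).le)) (Finset.mem_univ _)
    linarith [h1 ⟨0, hN⟩]
  have ht0 : 0 < t := by linarith
  have hlt1 : ∀ u, s < u → ∑ i, r i ^ u < 1 := by
    intro u hu
    rw [← hs]
    exact Finset.sum_lt_sum_of_nonempty Finset.univ_nonempty
      fun i _ => Real.rpow_lt_rpow_of_exponent_gt (hr i).1 (hr i).2 hu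
  have hCF : C ⊆ FC := by
    intro x hx
    rw [hFC]
    exact Or.inr hx
  have hsmall : ∀ᶠ δ in 𝓝[>] (0 : ℝ), δ ∈ Ioo (0 : ℝ) 1 := Ioo_mem_nhdsGT one_pos
  by_contra hcon
  push Not at hcon
  obtain ⟨m, hm1, hm2⟩ := exists_between hcon
  obtain ⟨htm, hsm⟩ := max_lt_iff.1 hm1
  -- boundedness of the admissible sets
  have hbdF : BddAbove {a : ℝ | ∀ᶠ δ in 𝓝[>] (0 : ℝ),
      a ≤ Real.log (coverN FC δ) / (-Real.log δ)} := by
    by_contra hnb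
    have : lbDim FC = 0 := by
      rw [lbDim, liminf_eq, Real.sSup_of_not_bddAbove hnb]
    linarith
  have hle : ∀ᶠ δ in 𝓝[>] (0 : ℝ), Real.log (coverN C δ) / (-Real.log δ) ≤
      Real.log (coverN FC δ) / (-Real.log δ) := by
    filter_upwards [hsmall] with δ hδ
    have hlogδ : Real.log δ < 0 := Real.log_neg hδ.1 hδ.2
    apply div_le_div_of_nonneg_right _ (by linarith)
    apply Real.log_le_log
    · exact_mod_cast one_le_coverN hCne hδ.1
    · exact_mod_cast coverN_mono hCF hδ.1 le_rfl
  have hfC : ∃ᶠ δ in 𝓝[>] (0 : ℝ), Real.log (coverN C δ) / (-Real.log δ) < t := by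
    intro hev
    simp only [not_lt] at hev
    have : t ≤ lbDim C := by
      rw [lbDim, liminf_eq]
      refine le_csSup (hbdF.mono ?_) hev
      intro a ha
      filter_upwards [ha, hle] with δ h1 h2 using h1.trans h2
    linarith
  have hevF : ∀ᶠ δ in 𝓝[>] (0 : ℝ), m ≤ Real.log (coverN FC δ) / (-Real.log δ) := by
    rw [lbDim, liminf_eq] at hm2
    have hne : {a : ℝ | ∀ᶠ δ in 𝓝[>] (0 : ℝ),
        a ≤ Real.log (coverN FC δ) / (-Real.log δ)}.Nonempty := by
      by_contra he
      rw [not_nonempty_iff_eq_empty] at he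
      rw [he, Real.sSup_empty] at hm2
      linarith
    obtain ⟨a, ha, hma⟩ := exists_lt_of_lt_csSup hne hm2
    filter_upwards [ha] with δ h using hma.le.trans h
  -- parameters
  obtain ⟨q, hq, σ, hσ, hσt, hqσ⟩ : ∃ q, creT C t < q ∧ ∃ σ, s < σ ∧ σ < t ∧ σ + q * t < m := by
    set e := m - (s + creT C t * t) with he
    have he0 : 0 < e := by linarith
    refine ⟨creT C t + e / (4 * t), by linarith [show 0 < e / (4 * t) by positivity],
      s + min (e / 4) ((t - s) / 2), ?_, ?_, ?_⟩
    · have : 0 < min (e / 4) ((t - s) / 2) := lt_min (by linarith) (by linarith)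
      linarith
    · linarith [min_le_right (e / 4) ((t - s) / 2)]
    have : (creT C t + e / (4 * t)) * t = creT C t * t + e / 4 := by
      field_simp
    rw [this]
    linarith [min_le_left (e / 4) ((t - s) / 2)]
  obtain ⟨iM, hiM⟩ := Finite.exists_max r
  obtain ⟨im, him⟩ := Finite.exists_min r
  set A : ℝ := 1 / (1 - ∑ i, r i ^ t) with hAdef
  set G : ℝ := 1 / (1 - ∑ i, r i ^ σ) with hGdef
  have hA1 : 0 < 1 - ∑ i, r i ^ t := by linarith [hlt1 t hst]
  have hG1 : 0 < 1 - ∑ i, r i ^ σ := by linarith [hlt1 σ hσ]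
  have hA0 : 0 < A := by positivity
  have hG0 : 0 < G := by positivity
  have hAe : A * (1 - ∑ i, r i ^ t) = 1 := by rw [hAdef]; field_simp
  have hGe : G * (1 - ∑ i, r i ^ σ) = 1 := by rw [hGdef]; field_simp
  set K : ℝ := ((coverN FC 1 : ℕ) : ℝ) with hKdef
  have hK0 : 0 ≤ K := by positivity
  have hbσ : 0 < r im ^ σ := Real.rpow_pos_of_pos (hr im).1 _
  set K' : ℝ := K / r im ^ σ with hK'def
  have hK'0 : 0 ≤ K' := by positivity
  have hK'e : K' * r im ^ σ = K := by rw [hK'def]; field_simp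
  set E : ℝ := max (max t (σ + q * t)) σ with hEdef
  have hEm : E < m := max_lt (max_lt htm hqσ) (by linarith)
  set L : ℝ := A + K' + G with hLdef
  have hL0 : 0 < L := by positivity
  have hbig : ∀ᶠ δ in 𝓝[>] (0 : ℝ), L < δ ^ (-(m - E)) :=
    (tendsto_rpow_neg_nhdsGT_zero (by linarith)).eventually_gt_atTop L
  obtain ⟨δ, hgood, ⟨hδ0, hδ1⟩, hmδ, hLδ⟩ :=
    ((frequently_good C hCne t q ht0 hq hfC).and_eventually
      (hsmall.and (hevF.and hbig))).exists
  have hlogδ : Real.log δ < 0 := Real.log_neg hδ0 hδ1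
  have hD0 : 0 < δ ^ (-(q * t)) := Real.rpow_pos_of_pos hδ0 _
  have hbound := rec_bound r hr (r iM) (r im) (hr iM).2 hiM (hr im).1 (hr im).2.le him (hr iM).1
    (fun x => (coverN FC x : ℝ)) (fun x => (coverN C x : ℝ)) δ t σ A
    (K' + G * δ ^ (-(q * t))) (δ ^ (-(q * t))) K hδ0 (by linarith)
    (fun x hx => by exact_mod_cast coverN_rec S r hr hS C FC hFC hx)
    (fun x hx => by
      rw [hKdef]
      exact_mod_cast coverN_mono (Subset.refl FC) one_pos hx)
    hD0.le hgood hA0.le (by linarith)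
    (by
      have h1 : 0 ≤ K' * (1 - ∑ i, r i ^ σ) := by positivity
      have h2 : G * (1 - ∑ i, r i ^ σ) * δ ^ (-(q * t)) = δ ^ (-(q * t)) := by
        rw [hGe, one_mul]
      nlinarith)
    (by positivity)
    (by
      have : 0 ≤ G * δ ^ (-(q * t)) * r im ^ σ := by positivity
      linarith)
    δ le_rfl hδ1
  have hc : (0 : ℝ) < coverN FC δ := by exact_mod_cast one_le_coverN hFCne hδ0
  have hlow : δ ^ (-m) ≤ (coverN FC δ : ℝ) := by
    rw [le_div_iff₀ (by linarith)] at hmδ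
    rw [Real.rpow_def_of_pos hδ0, ← Real.exp_log hc]
    apply Real.exp_le_exp.2
    linarith
  have hup : (coverN FC δ : ℝ) ≤ L * δ ^ (-E) := by
    refine hbound.trans ?_
    have e1 : δ ^ (-t) ≤ δ ^ (-E) := Real.rpow_le_rpow_of_exponent_ge hδ0 hδ1.le
      (neg_le_neg ((le_max_left _ _).trans (le_max_left _ _)))
    have e2 : δ ^ (-(q * t)) * δ ^ (-σ) ≤ δ ^ (-E) := by
      rw [← Real.rpow_add hδ0]
      refine Real.rpow_le_rpow_of_exponent_ge hδ0 hδ1.le ?_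
      have : σ + q * t ≤ E := (le_max_right _ _).trans (le_max_left _ _)
      linarith
    have e3 : δ ^ (-σ) ≤ δ ^ (-E) := Real.rpow_le_rpow_of_exponent_ge hδ0 hδ1.le
      (neg_le_neg (le_max_right _ _))
    have f1 := mul_le_mul_of_nonneg_left e1 hA0.le
    have f2 := mul_le_mul_of_nonneg_left e2 hG0.le
    have f3 := mul_le_mul_of_nonneg_left e3 hK'0
    rw [hLdef]
    nlinarith
  have hEpos : 0 < δ ^ (-E) := Real.rpow_pos_of_pos hδ0 _
  have hfin : L * δ ^ (-E) < δ ^ (-m) := by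
    have : δ ^ (-m) = δ ^ (-(m - E)) * δ ^ (-E) := by
      rw [← Real.rpow_add hδ0]
      congr 1
      ring
    rw [this]
    exact mul_lt_mul_of_pos_right hLδ hEpos
  linarith
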